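/- Let ζ = (Δt/ε + Δt²/(2ε²))(1 − a) and γ = ζ² + 2ζ with a ∈ (0,1), Δt > 0, ε > 0. Then γ > 0, γ is strictly decreasing in ε, and γ → +∞ as ε → 0⁺; consequently the CAT2-Tay stability bound μ ≤ (1/√2)·√(2 − w + √((2 − w)² + 2γ)) tends to +∞ as ε → 0⁺ for any fixed real w, meaning the scheme has no CFL restriction from this condition in the stiff limit. -/

import Mathlib

open Filter Topology Set

/-!
As `ε → 0⁺`, `ζ` increases to `+∞`, already because of its term `Δt / ε`. The number `γ` depends on
`ζ` alone, through `γ + 1 = (ζ + 1) ^ 2`, and the stability bound depends on `ε` through `γ` alone.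
Both dependences send `+∞` to `+∞`, so the limits compose; positivity and monotonicity of `γ` are
likewise inherited from `ζ`.
-/

namespace CAT2Tay

/-- The quantity `ζ` of the stability analysis, in terms of the coefficient `a` of `g u = a * u`,
the time step `Δt` and the relaxation parameter `ε`. It takes the junk value `0` at `ε = 0`. -/
noncomputable def zeta (a Δt ε : ℝ) : ℝ :=
  (Δt / ε + Δt ^ 2 / (2 * ε ^ 2)) * (1 - a)

/-- The quantity `γ` of the stability analysis as a function of `ζ`, so that the relaxation
parameter enters only through `ζ`. -/
def gamma (ζ : ℝ) : ℝ :=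
  ζ ^ 2 + 2 * ζ

/-- The upper bound on the CFL number `μ` in the stability condition, as a function of `w` and
`γ`. -/
noncomputable def stabilityBound (w γ : ℝ) : ℝ :=
  1 / √2 * √(2 - w + √((2 - w) ^ 2 + 2 * γ))

section Zeta

variable {a Δt : ℝ}

theorem zeta_pos {ε : ℝ} (ha : a < 1) (hΔt : 0 < Δt) (hε : 0 < ε) : 0 < zeta a Δt ε :=
  mul_pos (by positivity) (sub_pos.2 ha)

theorem strictAntiOn_zeta (ha : a < 1) (hΔt : 0 < Δt) : StrictAntiOn (zeta a Δt) (Ioi 0) := by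
  intro x (hx : 0 < x) y _ hxy
  have hlin : Δt / y < Δt / x := by gcongr
  have hquad : Δt ^ 2 / (2 * y ^ 2) < Δt ^ 2 / (2 * x ^ 2) := by gcongr
  exact mul_lt_mul_of_pos_right (add_lt_add hlin hquad) (sub_pos.2 ha)

theorem tendsto_zeta_nhdsGT_zero (ha : a < 1) (hΔt : 0 < Δt) :
    Tendsto (zeta a Δt) (𝓝[>] 0) atTop := by
  have hlin : Tendsto (fun ε : ℝ => Δt / ε) (𝓝[>] 0) atTop :=
    tendsto_inv_nhdsGT_zero.const_mul_atTop hΔt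
  have hquad (ε : ℝ) : 0 ≤ Δt ^ 2 / (2 * ε ^ 2) := by positivity
  exact (hlin.atTop_add_nonneg hquad).atTop_mul_const (sub_pos.2 ha)

end Zeta

theorem gamma_pos {ζ : ℝ} (hζ : 0 < ζ) : 0 < gamma ζ := by
  unfold gamma
  positivity

theorem gamma_add_one (ζ : ℝ) : gamma ζ + 1 = (ζ + 1) ^ 2 := by
  unfold gamma
  ring

theorem strictMonoOn_gamma : StrictMonoOn gamma (Ici (-1)) := by
  intro x (hx : -1 ≤ x) y _ hxy
  have hsq : (x + 1) ^ 2 < (y + 1) ^ 2 :=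
    pow_lt_pow_left₀ (by linarith) (by linarith) two_ne_zero
  rwa [← gamma_add_one, ← gamma_add_one, add_lt_add_iff_right] at hsq

theorem tendsto_gamma_atTop : Tendsto gamma atTop atTop :=
  (tendsto_pow_atTop two_ne_zero).atTop_add_atTop (tendsto_id.const_mul_atTop two_pos)

theorem tendsto_stabilityBound_atTop (w : ℝ) : Tendsto (stabilityBound w) atTop atTop := by
  have hinner : Tendsto (fun γ : ℝ => √((2 - w) ^ 2 + 2 * γ)) atTop atTop :=
    Real.tendsto_sqrt_atTop.comp <|
      tendsto_atTop_add_const_left _ _ (tendsto_id.const_mul_atTop two_pos)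
  have houter : Tendsto (fun γ : ℝ => √(2 - w + √((2 - w) ^ 2 + 2 * γ))) atTop atTop :=
    Real.tendsto_sqrt_atTop.comp (tendsto_atTop_add_const_left _ _ hinner)
  exact houter.const_mul_atTop (by positivity)

end CAT2Tay

open CAT2Tay in
theorem cat2tay_no_cfl_in_stiff_limit_general {a Δt : ℝ} (w : ℝ) (ha : a < 1) (hΔt : 0 < Δt) :
    (∀ ε : ℝ, 0 < ε → 0 < gamma (zeta a Δt ε)) ∧
    StrictAntiOn (fun ε => gamma (zeta a Δt ε)) (Ioi 0) ∧
    Tendsto (fun ε => gamma (zeta a Δt ε)) (𝓝[>] 0) atTop ∧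
    Tendsto (fun ε => stabilityBound w (gamma (zeta a Δt ε))) (𝓝[>] 0) atTop := by
  have hmaps : MapsTo (zeta a Δt) (Ioi 0) (Ici (-1)) := fun ε hε =>
    neg_one_lt_zero.le.trans (zeta_pos ha hΔt hε).le
  have hgamma : Tendsto (fun ε => gamma (zeta a Δt ε)) (𝓝[>] 0) atTop :=
    tendsto_gamma_atTop.comp (tendsto_zeta_nhdsGT_zero ha hΔt)
  exact ⟨fun ε hε => gamma_pos (zeta_pos ha hΔt hε),
    strictMonoOn_gamma.comp_strictAntiOn (strictAntiOn_zeta ha hΔt) hmaps,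
    hgamma,
    (tendsto_stabilityBound_atTop w).comp hgamma⟩

/-- With ζ_ε = (Δt/ε + Δt²/(2ε²))(1-a) and γ_ε = ζ_ε² + 2ζ_ε: γ_ε > 0, γ is strictly
decreasing in ε, γ_ε → +∞ as ε → 0⁺, and the CAT2-Tay stability bound
(1/√2)·√(2 - w + √((2-w)² + 2γ_ε)) tends to +∞ as ε → 0⁺ for any fixed w. -/
theorem cat2tay_no_cfl_in_stiff_limit (a Δt w : ℝ) (ha : 0 < a) (ha1 : a < 1)
    (hΔt : 0 < Δt) :
    (∀ ε : ℝ, 0 < ε →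
        0 < ((Δt / ε + Δt ^ 2 / (2 * ε ^ 2)) * (1 - a)) ^ 2
              + 2 * ((Δt / ε + Δt ^ 2 / (2 * ε ^ 2)) * (1 - a))) ∧
    StrictAntiOn (fun ε : ℝ =>
        ((Δt / ε + Δt ^ 2 / (2 * ε ^ 2)) * (1 - a)) ^ 2
          + 2 * ((Δt / ε + Δt ^ 2 / (2 * ε ^ 2)) * (1 - a))) (Ioi 0) ∧
    Tendsto (fun ε : ℝ =>
        ((Δt / ε + Δt ^ 2 / (2 * ε ^ 2)) * (1 - a)) ^ 2
          + 2 * ((Δt / ε + Δt ^ 2 / (2 * ε ^ 2)) * (1 - a))) (𝓝[>] 0) atTop ∧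
    Tendsto (fun ε : ℝ =>
        (1 / Real.sqrt 2) * Real.sqrt (2 - w + Real.sqrt ((2 - w) ^ 2
          + 2 * (((Δt / ε + Δt ^ 2 / (2 * ε ^ 2)) * (1 - a)) ^ 2
            + 2 * ((Δt / ε + Δt ^ 2 / (2 * ε ^ 2)) * (1 - a))))))
      (𝓝[>] 0) atTop :=
  cat2tay_no_cfl_in_stiff_limit_general w ha1 hΔt
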